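/- Let m ≥ 2 and let n > 1 be odd. In the free Burnside group B(m,n) with free generators a₁, …, a_m, the elements [a₁, a₂] := a₁a₂a₁⁻¹a₂⁻¹, a₂, and a₁a₂^i for each i = 0, 1, …, n−1 all have order exactly n; moreover a₁a₂a₁⁻¹ ∉ ⟨[a₁, a₂]⟩ and [a₁, a₂]^j a₁a₂a₁⁻¹ ∉ ⟨a₁a₂^i⟩ for all i, j ∈ {0, 1, …, n−1}. -/

import Mathlib

/-!
For odd `n` the Heisenberg group over `ℤ/n` has exponent `n`: the `k`-th power of `(x, y, z)` is
`(k x, k y, k z + (k choose 2) x y)`, and `n` divides `n choose 2`. Hence `B(m, n)` maps to it by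
`a₁ ↦ (1, 0, 0)`, `a₂ ↦ (0, 1, 0)`, other generators to `1`, and `c = [a₁, a₂] ↦ (0, 0, 1)`.
Every element of `B(m, n)` has order dividing `n`, and each of `c`, `a₂`, `a₁ a₂ ^ i` has a
coordinate of its image that is multiplied by `k` in the `k`-th power and equals `1`, so the orders
are exactly `n`.

The non-memberships are visible in the first two coordinates, that is, in the abelianization: `c`
has `y = 0` while `a₁ a₂ a₁⁻¹` has `y = 1`; and `c ^ j a₁ a₂ a₁⁻¹` has `(x, y) = (0, 1)`, whereas
`(a₁ a₂ ^ i) ^ k` has `(x, y) = (k, k i)`, and `k = 0` forces `k i = 0`.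
-/

/-- The free Burnside group `B(m, n)`: the quotient of the free group of rank `m` by the
normal subgroup generated by all `n`-th powers. -/
abbrev FreeBurnsideGroup (m n : ℕ) : Type :=
  FreeGroup (Fin m) ⧸ Subgroup.normalClosure {x : FreeGroup (Fin m) | ∃ y, y ^ n = x}

/-- The free generators of `B(m, n)`: images of the free generators of the free group. -/
def FreeBurnsideGroup.gen (m n : ℕ) (i : Fin m) : FreeBurnsideGroup m n :=
  QuotientGroup.mk (FreeGroup.of i)

/-- The Heisenberg group over `ℤ/n`: the triple `(x, y, z)` stands for the upper unitriangular
matrix with `x`, `y` above the diagonal and `z` in the corner. -/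
@[ext]
structure HeisenbergMod (n : ℕ) where
  /-- The `(1, 2)` entry. -/
  x : ZMod n
  /-- The `(2, 3)` entry. -/
  y : ZMod n
  /-- The `(1, 3)` entry. -/
  z : ZMod n

namespace HeisenbergMod

variable {n : ℕ}

instance : Mul (HeisenbergMod n) := ⟨fun a b => ⟨a.x + b.x, a.y + b.y, a.z + b.z + a.x * b.y⟩⟩
instance : One (HeisenbergMod n) := ⟨⟨0, 0, 0⟩⟩
instance : Inv (HeisenbergMod n) := ⟨fun a => ⟨-a.x, -a.y, -a.z + a.x * a.y⟩⟩

@[simp] lemma mul_x (a b : HeisenbergMod n) : (a * b).x = a.x + b.x := rfl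
@[simp] lemma mul_y (a b : HeisenbergMod n) : (a * b).y = a.y + b.y := rfl
@[simp] lemma mul_z (a b : HeisenbergMod n) : (a * b).z = a.z + b.z + a.x * b.y := rfl
@[simp] lemma one_x : (1 : HeisenbergMod n).x = 0 := rfl
@[simp] lemma one_y : (1 : HeisenbergMod n).y = 0 := rfl
@[simp] lemma one_z : (1 : HeisenbergMod n).z = 0 := rfl
@[simp] lemma inv_x (a : HeisenbergMod n) : (a⁻¹).x = -a.x := rfl
@[simp] lemma inv_y (a : HeisenbergMod n) : (a⁻¹).y = -a.y := rfl
@[simp] lemma inv_z (a : HeisenbergMod n) : (a⁻¹).z = -a.z + a.x * a.y := rfl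

instance : Group (HeisenbergMod n) :=
  Group.ofLeftAxioms
    (fun a b c => by ext <;> simp <;> ring)
    (fun a => by ext <;> simp)
    (fun a => by ext <;> simp)

@[simp] lemma pow_x (a : HeisenbergMod n) (k : ℕ) : (a ^ k).x = k * a.x := by
  induction k with
  | zero => simp
  | succ k ih => rw [pow_succ, mul_x, ih]; push_cast; ring

@[simp] lemma pow_y (a : HeisenbergMod n) (k : ℕ) : (a ^ k).y = k * a.y := by
  induction k with
  | zero => simp
  | succ k ih => rw [pow_succ, mul_y, ih]; push_cast; ring

lemma pow_z (a : HeisenbergMod n) (k : ℕ) :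
    (a ^ k).z = k * a.z + (k.choose 2 : ℕ) * (a.x * a.y) := by
  induction k with
  | zero => simp
  | succ k ih =>
    rw [pow_succ, mul_z, ih, pow_x, Nat.choose_succ_succ' k 1, Nat.choose_one_right]
    push_cast; ring

lemma pow_exponent (hodd : Odd n) (a : HeisenbergMod n) : a ^ n = 1 := by
  have hc : ((n.choose 2 : ℕ) : ZMod n) = 0 := by
    rw [ZMod.natCast_eq_zero_iff]
    obtain ⟨k, rfl⟩ := hodd
    refine ⟨k, ?_⟩
    rw [Nat.choose_two_right, Nat.add_sub_cancel, mul_left_comm,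
      Nat.mul_div_cancel_left _ two_pos]
  ext
  · simp
  · simp
  · rw [pow_z, hc]; simp

end HeisenbergMod

namespace FreeBurnsideGroup

lemma pow_exponent (m n : ℕ) (g : FreeBurnsideGroup m n) : g ^ n = 1 := by
  induction g using QuotientGroup.induction_on with
  | H w =>
    rw [← QuotientGroup.mk_pow, QuotientGroup.eq_one_iff]
    exact Subgroup.subset_normalClosure ⟨w, rfl⟩

/-- The homomorphism from `B(m, n)`, `n` odd, to the Heisenberg group over `ℤ/n` sending the first
two generators to the standard ones and the others to `1`. -/
def toHeisenberg (m n : ℕ) (hodd : Odd n) : FreeBurnsideGroup m n →* HeisenbergMod n :=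
  QuotientGroup.lift _
    (FreeGroup.lift fun i : Fin m =>
      if i.val = 0 then ⟨1, 0, 0⟩ else if i.val = 1 then ⟨0, 1, 0⟩ else 1)
    (by
      refine Subgroup.normalClosure_le_normal ?_
      rintro _ ⟨y, rfl⟩
      simp only [SetLike.mem_coe, MonoidHom.mem_ker, map_pow]
      exact HeisenbergMod.pow_exponent hodd _)

lemma toHeisenberg_gen (m n : ℕ) (hodd : Odd n) (i : Fin m) :
    toHeisenberg m n hodd (gen m n i) =
      if i.val = 0 then ⟨1, 0, 0⟩ else if i.val = 1 then ⟨0, 1, 0⟩ else 1 := by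
  simp [toHeisenberg, gen]

/-- Orders divide `n` in `B(m, n)`, so only the divisibility of the order by `n` has to be supplied;
it is phrased in `ZMod n`, where the coordinates of the Heisenberg group live. -/
lemma orderOf_eq (m n : ℕ) (g : FreeBurnsideGroup m n)
    (h : ∀ k : ℕ, g ^ k = 1 → (k : ZMod n) = 0) : orderOf g = n :=
  Nat.dvd_antisymm (orderOf_dvd_of_pow_eq_one (pow_exponent m n g))
    ((ZMod.natCast_eq_zero_iff _ _).1 (h _ (pow_orderOf_eq_one g)))

/-- Since `B(m, n)` is periodic, cyclic subgroups consist of powers with natural exponents. -/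
lemma exists_pow_of_mem_zpowers {m n : ℕ} (hn : 0 < n) {g h : FreeBurnsideGroup m n}
    (hh : h ∈ Subgroup.zpowers g) : ∃ k : ℕ, g ^ k = h :=
  (isOfFinOrder_iff_pow_eq_one.2 ⟨n, hn, pow_exponent m n g⟩).mem_powers_iff_mem_zpowers.2 hh

end FreeBurnsideGroup

open FreeBurnsideGroup in
/-- for `m ≥ 2` and odd `n > 1`, in `B(m,n)` the elements
`[a₁,a₂]`, `a₂`, and `a₁a₂^i` (for `i = 0, …, n-1`) have order exactly `n`; moreover
`a₁a₂a₁⁻¹ ∉ ⟨[a₁,a₂]⟩` and `[a₁,a₂]^j a₁a₂a₁⁻¹ ∉ ⟨a₁a₂^i⟩` for all `i, j < n`. -/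
theorem burnside_orders_and_nonmembership (m n : ℕ) (hm : 2 ≤ m) (hn : 1 < n)
    (hodd : Odd n) :
    let a₁ : FreeBurnsideGroup m n := FreeBurnsideGroup.gen m n ⟨0, by omega⟩
    let a₂ : FreeBurnsideGroup m n := FreeBurnsideGroup.gen m n ⟨1, by omega⟩
    let c : FreeBurnsideGroup m n := a₁ * a₂ * a₁⁻¹ * a₂⁻¹
    orderOf c = n ∧ orderOf a₂ = n ∧ (∀ i < n, orderOf (a₁ * a₂ ^ i) = n) ∧
      a₁ * a₂ * a₁⁻¹ ∉ Subgroup.zpowers c ∧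
      ∀ i < n, ∀ j < n,
        c ^ j * (a₁ * a₂ * a₁⁻¹) ∉ Subgroup.zpowers (a₁ * a₂ ^ i) := by
  intro a₁ a₂ c
  have : Fact (1 < n) := ⟨hn⟩
  let φ := toHeisenberg m n hodd
  have h₁ : φ a₁ = ⟨1, 0, 0⟩ := by simp [φ, a₁, toHeisenberg_gen]
  have h₂ : φ a₂ = ⟨0, 1, 0⟩ := by simp [φ, a₂, toHeisenberg_gen]
  have hc : φ c = ⟨0, 0, 1⟩ := by
    simp only [c, map_mul, map_inv, h₁, h₂]
    ext <;> simp
  refine ⟨orderOf_eq m n _ fun k hk => ?_, orderOf_eq m n _ fun k hk => ?_,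
    fun i _ => orderOf_eq m n _ fun k hk => ?_, fun h => ?_, fun i _ j _ h => ?_⟩
  · simpa [hc, HeisenbergMod.pow_z] using congrArg (fun g => (φ g).z) hk
  · simpa [h₂] using congrArg (fun g => (φ g).y) hk
  · simpa [h₁, h₂] using congrArg (fun g => (φ g).x) hk
  · obtain ⟨k, hk⟩ := exists_pow_of_mem_zpowers (by omega) h
    simpa [h₁, h₂, hc] using congrArg (fun g => (φ g).y) hk
  · obtain ⟨k, hk⟩ := exists_pow_of_mem_zpowers (by omega) h
    have hx : (k : ZMod n) = 0 := by
      simpa [h₁, h₂, hc] using congrArg (fun g => (φ g).x) hk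
    simpa [h₁, h₂, hc, hx] using congrArg (fun g => (φ g).y) hk
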